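/- If the minimum number of 2-swaps transforming w into v corresponds to a cycle cover 𝒞 of the 2-swap graph G(w,v), then the cycles of 𝒞 must be pairwise vertex-disjoint. -/

import Mathlib

/-- The Parikh vector of a word `w : Fin n → Fin σ`. -/
def parikh {n σ : ℕ} (w : Fin n → Fin σ) : Fin σ → ℕ :=
  fun a => (Finset.univ.filter fun i => w i = a).card

/-- Words of length `n` over alphabet `Fin σ` with Parikh vector `P`. -/
abbrev Words (n σ : ℕ) (P : Fin σ → ℕ) := {w : Fin n → Fin σ // parikh w = P}

/-- `u` is obtained from `w` by a single 2-swap. -/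
def isSwap {n σ : ℕ} (w u : Fin n → Fin σ) : Prop :=
  ∃ i j : Fin n, i ≠ j ∧ w i ≠ w j ∧ u = w ∘ Equiv.swap i j

/-- The configuration graph `G(P)`. -/
def configGraph (n σ : ℕ) (P : Fin σ → ℕ) : SimpleGraph (Words n σ P) :=
  SimpleGraph.fromRel fun w u => isSwap w.1 u.1

/-- `isSwapChain w l v`: the list of 2-swaps `l`, applied in order to `w`, is a
valid sequence of 2-swaps (each exchanging two positions holding distinct symbols)
transforming `w` into `v`. -/
def isSwapChain {n σ : ℕ} : (Fin n → Fin σ) → List (Fin n × Fin n) → (Fin n → Fin σ) → Prop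
  | w, [], v => w = v
  | w, s :: l, v => s.1 ≠ s.2 ∧ w s.1 ≠ w s.2 ∧ isSwapChain (w ∘ Equiv.swap s.1 s.2) l v

/-- The minimum number of 2-swaps transforming `w` into `v`. -/
noncomputable def swapDist {n σ : ℕ} (w v : Fin n → Fin σ) : ℕ :=
  sInf {k | ∃ l : List (Fin n × Fin n), l.length = k ∧ isSwapChain w l v}

/-- `c` is a (directed) cycle in the 2-swap graph `G(w,v)`: a nonempty duplicate-free
list of positions where each consecutive pair (cyclically) `(i, j)` satisfies `w i = v j`. -/
def IsSwapCycle {n σ : ℕ} (w v : Fin n → Fin σ) (c : List (Fin n)) : Prop :=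
  c ≠ [] ∧ c.Nodup ∧ ∀ p ∈ c.zip (c.rotate 1), w p.1 = v p.2

/-- `𝒞` is a cycle cover of the 2-swap graph `G(w,v)`. -/
def IsCycleCover {n σ : ℕ} (w v : Fin n → Fin σ) (𝒞 : Finset (List (Fin n))) : Prop :=
  (∀ c ∈ 𝒞, IsSwapCycle w v c) ∧ ∀ i : Fin n, ∃ c ∈ 𝒞, i ∈ c

/-! Suppose two cycles of the cover share a position; at least one of them, say `c₂`, has length at
least two, and we let `c₁` be the other. Extend `{c₁}` to a maximal pairwise disjoint subfamily `D`
of the cover, so that `c₂ ∉ D`. Applying the inverse of each cyclic permutation in `D` takes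
`∑ c ∈ D, (c.length - 1)` swaps and makes `w` agree with `v` on all positions of `D`. By maximality
every cycle outside `D` meets `D`, hence contributes at most `c.length - 1` positions of
disagreement, so at most `R := ∑ c ∈ 𝒞 \ D, (c.length - 1)` disagreements remain, where `R > 0`
because of `c₂`. Two words with the same Parikh vector differing in `d > 0` positions are at most
`d - 1` swaps apart: every swap can correct one position, and the last one corrects two. This beats
the cost of the cover by at least one swap. -/

theorem hammingDist_comp_swap_lt {ι α : Type*} [Fintype ι] [DecidableEq ι] [DecidableEq α]
    {x y : ι → α} {i j : ι} (hji : x j = y i) (hi : x i ≠ y i) (hj : x j ≠ y j) :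
    hammingDist (x ∘ Equiv.swap i j) y < hammingDist x y := by
  refine Finset.card_lt_card (Finset.ssubset_iff_of_subset (fun k hk => ?_) |>.mpr
    ⟨i, by simpa using hi, by simpa using hji⟩)
  simp only [Finset.mem_filter_univ, Function.comp_apply] at hk ⊢
  rcases eq_or_ne k i with rfl | hki
  · exact hi
  rcases eq_or_ne k j with rfl | hkj
  · exact hj
  rwa [Equiv.swap_apply_of_ne_of_ne hki hkj] at hk

theorem hammingDist_le_sum_length_sub_one {ι α : Type*} [Fintype ι] [DecidableEq α]
    {x y : ι → α} {S : Finset (List ι)} (hcover : ∀ i, x i ≠ y i → ∃ c ∈ S, i ∈ c)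
    (hagree : ∀ c ∈ S, ∃ i ∈ c, x i = y i) :
    hammingDist x y ≤ ∑ c ∈ S, (c.length - 1) := by
  classical
  have hsub : ({i | x i ≠ y i} : Finset ι) ⊆ S.biUnion fun c => {i ∈ c.toFinset | x i ≠ y i} := by
    intro i hi
    obtain ⟨c, hc, hic⟩ := hcover i ((Finset.mem_filter_univ i).mp hi)
    simp only [Finset.mem_biUnion, Finset.mem_filter, List.mem_toFinset]
    exact ⟨c, hc, hic, (Finset.mem_filter_univ i).mp hi⟩
  refine (Finset.card_le_card hsub).trans (Finset.card_biUnion_le.trans ?_)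
  refine Finset.sum_le_sum fun c hc => Nat.le_sub_one_of_lt ?_
  obtain ⟨i, hic, hi⟩ := hagree c hc
  calc ({i ∈ c.toFinset | x i ≠ y i}).card
      < c.toFinset.card := Finset.card_lt_card
        (Finset.filter_ssubset.mpr ⟨i, List.mem_toFinset.mpr hic, not_not.mpr hi⟩)
    _ ≤ c.length := c.toFinset_card_le

theorem exists_maximal_pairwise_superset {α : Type*} {r : α → α → Prop} [Std.Symm r]
    {s t : Finset α} (hst : s ⊆ t) (hs : (s : Set α).Pairwise r) :
    ∃ u, s ⊆ u ∧ u ⊆ t ∧ (u : Set α).Pairwise r ∧ ∀ a ∈ t, a ∉ u → ∃ b ∈ u, ¬ r a b := by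
  classical
  let F : Finset (Finset α) := {u ∈ t.powerset | (u : Set α).Pairwise r}
  have mem_F {u : Finset α} : u ∈ F ↔ u ⊆ t ∧ (u : Set α).Pairwise r := by
    simp only [F, Finset.mem_filter, Finset.mem_powerset]
  obtain ⟨u, hsu, hmax⟩ := F.exists_le_maximal (mem_F.mpr ⟨hst, hs⟩)
  obtain ⟨hut, hu⟩ := mem_F.mp hmax.prop
  refine ⟨u, hsu, hut, hu, fun a hat hau => ?_⟩
  by_contra! hcompat
  have hinsert : insert a u ∈ F := by
    refine mem_F.mpr ⟨Finset.insert_subset hat hut, ?_⟩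
    rw [Finset.coe_insert]
    exact hu.insert_of_symm fun b hb _ => hcompat b hb
  exact hau (hmax.le_of_ge hinsert (Finset.subset_insert a u) (Finset.mem_insert_self a u))

theorem one_lt_length_of_mem_of_ne_singleton {α : Type*} {a : α} {l : List α} (ha : a ∈ l)
    (hl : l ≠ [a]) : 1 < l.length := by
  refine lt_of_le_of_ne' (List.length_pos_of_mem ha) fun h => hl ?_
  obtain ⟨b, rfl⟩ := List.length_eq_one_iff.mp h
  rw [List.mem_singleton.mp ha]

/-- `SwapReachable k w v`: some valid sequence of at most `k` 2-swaps transforms `w` into `v`. -/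
def SwapReachable {n σ : ℕ} (k : ℕ) (w v : Fin n → Fin σ) : Prop :=
  ∃ l : List (Fin n × Fin n), l.length ≤ k ∧ isSwapChain w l v

section Words

variable {n σ : ℕ} {w u v : Fin n → Fin σ}

theorem parikh_comp_perm (w : Fin n → Fin σ) (e : Equiv.Perm (Fin n)) :
    parikh (w ∘ e) = parikh w := by
  funext a
  exact Finset.card_equiv e (by simp)

theorem exists_apply_eq_and_ne_of_parikh_eq (h : parikh w = parikh v) {i : Fin n}
    (hi : w i ≠ v i) : ∃ j, w j = v i ∧ w j ≠ v j := by
  by_contra! hall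
  have hlt : parikh w (v i) < parikh v (v i) := by
    refine Finset.card_lt_card (Finset.ssubset_iff_of_subset (fun j hj => ?_) |>.mpr
      ⟨i, by simp, by simpa using hi⟩)
    simp only [Finset.mem_filter_univ] at hj ⊢
    rw [← hall j hj, hj]
  exact hlt.ne (congrFun h (v i))

theorem isSwapChain.append {l m : List (Fin n × Fin n)} (hl : isSwapChain w l u)
    (hm : isSwapChain u m v) : isSwapChain w (l ++ m) v := by
  induction l generalizing w with
  | nil =>
    obtain rfl : w = u := hl
    exact hm
  | cons s l ih => exact ⟨hl.1, hl.2.1, ih hl.2.2⟩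

theorem isSwapChain.parikh_eq {l : List (Fin n × Fin n)} (h : isSwapChain w l v) :
    parikh w = parikh v := by
  induction l generalizing w with
  | nil => exact congrArg parikh h
  | cons s l ih => rw [← ih h.2.2, parikh_comp_perm]

-- `swapDist w v` is the junk value `sInf ∅ = 0` when no sequence of 2-swaps leads from `w` to `v`.
theorem parikh_eq_of_swapDist_pos (h : 0 < swapDist w v) : parikh w = parikh v := by
  obtain ⟨_, _, -, hchain⟩ := Nat.nonempty_of_pos_sInf h
  exact hchain.parikh_eq

namespace SwapReachable

variable {j k : ℕ}

theorem refl (k : ℕ) (w : Fin n → Fin σ) : SwapReachable k w w := ⟨[], k.zero_le, rfl⟩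

theorem mono (h : SwapReachable j w v) (hjk : j ≤ k) : SwapReachable k w v := by
  obtain ⟨l, hl, hchain⟩ := h
  exact ⟨l, hl.trans hjk, hchain⟩

theorem trans (hj : SwapReachable j w u) (hk : SwapReachable k u v) :
    SwapReachable (j + k) w v := by
  obtain ⟨l, hl, hwu⟩ := hj
  obtain ⟨m, hm, huv⟩ := hk
  exact ⟨l ++ m, List.length_append.trans_le (add_le_add hl hm), hwu.append huv⟩

theorem parikh_eq (h : SwapReachable k w v) : parikh w = parikh v := by
  obtain ⟨_, -, hchain⟩ := h
  exact hchain.parikh_eq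

theorem swapDist_le (h : SwapReachable k w v) : swapDist w v ≤ k := by
  obtain ⟨l, hl, hchain⟩ := h
  exact le_trans (Nat.sInf_le ⟨l, rfl, hchain⟩) hl

theorem comp_swap (w : Fin n → Fin σ) (i j : Fin n) :
    SwapReachable 1 w (w ∘ Equiv.swap i j) := by
  by_cases hij : w i = w j
  · have hw : w ∘ Equiv.swap i j = w := funext fun _ => Equiv.apply_swap_eq_self hij _
    rw [hw]
    exact refl 1 w
  · exact ⟨[(i, j)], le_rfl, ne_of_apply_ne w hij, hij, rfl⟩

theorem comp_formPerm (w : Fin n → Fin σ) (c : List (Fin n)) :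
    SwapReachable (c.length - 1) w (w ∘ c.formPerm) := by
  match c with
  | [] => exact refl _ w
  | [i] => exact refl _ w
  | i :: j :: c =>
    rw [List.formPerm_cons_cons, Equiv.Perm.coe_mul, ← Function.comp_assoc]
    exact ((comp_swap w i j).trans (comp_formPerm _ (j :: c))).mono (by simp [add_comm])

theorem of_parikh_eq (h : parikh w = parikh v) : SwapReachable (hammingDist w v - 1) w v := by
  induction hd : hammingDist w v using Nat.strong_induction_on generalizing w with
  | _ d ih =>
    rcases eq_or_ne w v with rfl | hwv
    · exact refl _ w
    obtain ⟨i, hi⟩ := Function.ne_iff.mp hwv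
    obtain ⟨j, hji, hj⟩ := exists_apply_eq_and_ne_of_parikh_eq h hi
    have hij : i ≠ j := by
      rintro rfl
      exact hi hji
    have htwo : 1 < hammingDist w v :=
      Finset.one_lt_card.mpr ⟨i, by simpa using hi, j, by simpa using hj, hij⟩
    have hlt := hammingDist_comp_swap_lt hji hi hj
    have hrest := ih _ (hd ▸ hlt) ((parikh_comp_perm w _).trans h) rfl
    exact ((comp_swap w i j).trans hrest).mono (by omega)

end SwapReachable

namespace IsSwapCycle

variable {l : List (Fin n)}

theorem congr (h : IsSwapCycle w v l) (huw : ∀ i ∈ l, u i = w i) : IsSwapCycle u v l :=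
  ⟨h.1, h.2.1, fun p hp => (huw p.1 (List.of_mem_zip hp).1).trans (h.2.2 p hp)⟩

theorem apply_formPerm (h : IsSwapCycle w v l) {i : Fin n} (hi : i ∈ l) :
    v (l.formPerm i) = w i := by
  obtain ⟨k, hk, rfl⟩ := List.mem_iff_getElem.mp hi
  have hedge : (l[k], l.formPerm l[k]) ∈ l.zip (l.rotate 1) := by
    rw [List.formPerm_apply_getElem l h.2.1 k hk]
    exact List.mem_iff_getElem.mpr ⟨k, by simpa using hk, by simp [List.getElem_rotate]⟩
  exact (h.2.2 _ hedge).symm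

theorem exists_swapReachable (h : IsSwapCycle w v l) :
    ∃ u, SwapReachable (l.length - 1) w u ∧ (∀ i ∈ l, u i = v i) ∧ ∀ i ∉ l, u i = w i := by
  -- Position `l.formPerm i` must receive the symbol `w i`; reversing `l` inverts `l.formPerm`.
  refine ⟨w ∘ l.reverse.formPerm, ?_, fun i hi => ?_, fun i hi => ?_⟩
  · simpa only [List.length_reverse] using SwapReachable.comp_formPerm w l.reverse
  · have hmem : l.reverse.formPerm i ∈ l := by
      rwa [← List.mem_reverse, List.formPerm_mem_iff_mem, List.mem_reverse]
    rw [Function.comp_apply, ← h.apply_formPerm hmem, List.formPerm_reverse,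
      ← Equiv.Perm.mul_apply, mul_inv_cancel, Equiv.Perm.one_apply]
  · rw [Function.comp_apply, List.formPerm_apply_of_notMem (List.mem_reverse.not.mpr hi)]

theorem exists_swapReachable_of_pairwise_disjoint {D : Finset (List (Fin n))}
    (hcyc : ∀ c ∈ D, IsSwapCycle w v c) (hdisj : (D : Set (List (Fin n))).Pairwise List.Disjoint) :
    ∃ u, SwapReachable (∑ c ∈ D, (c.length - 1)) w u ∧ (∀ c ∈ D, ∀ i ∈ c, u i = v i) ∧
      ∀ i, (∀ c ∈ D, i ∉ c) → u i = w i := by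
  induction D using Finset.induction_on with
  | empty => exact ⟨w, .refl _ w, by simp, fun _ _ => rfl⟩
  | insert c D hcD ih =>
    simp only [Finset.forall_mem_insert] at hcyc ⊢
    rw [Finset.coe_insert, Set.pairwise_insert_of_notMem hcD] at hdisj
    obtain ⟨hdisjD, hdisjc⟩ := hdisj
    obtain ⟨x, hwx, hxv, hxw⟩ := ih hcyc.2 hdisjD
    have hc : IsSwapCycle x v c :=
      hcyc.1.congr fun i hi => hxw i fun d hd hid => (hdisjc d hd).1 hi hid
    obtain ⟨u, hxu, huv, hux⟩ := hc.exists_swapReachable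
    refine ⟨u, ?_, ⟨huv, fun d hd i hi => ?_⟩, fun i hi => ?_⟩
    · rw [Finset.sum_insert hcD, add_comm]
      exact hwx.trans hxu
    · rw [hux i fun hic => (hdisjc d hd).1 hic hi, hxv d hd i hi]
    · rw [hux i hi.1, hxw i hi.2]

end IsSwapCycle

namespace IsCycleCover

variable {𝒞 : Finset (List (Fin n))}

theorem swapDist_lt_sum_of_not_disjoint (hcov : IsCycleCover w v 𝒞) (hpar : parikh w = parikh v)
    {c₁ c₂ : List (Fin n)} (h₁ : c₁ ∈ 𝒞) (h₂ : c₂ ∈ 𝒞) (hne : c₁ ≠ c₂)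
    (hmeet : ¬ c₁.Disjoint c₂) (hlen : 1 < c₂.length) :
    swapDist w v < ∑ c ∈ 𝒞, (c.length - 1) := by
  have : Std.Symm (List.Disjoint (α := Fin n)) := ⟨fun _ _ => List.Disjoint.symm⟩
  have hsingle : (({c₁} : Finset (List (Fin n))) : Set (List (Fin n))).Pairwise List.Disjoint := by
    simp only [Finset.coe_singleton, Set.pairwise_singleton]
  obtain ⟨D, hc₁D, hD, hdisj, hmax⟩ :=
    exists_maximal_pairwise_superset (Finset.singleton_subset_iff.mpr h₁) hsingle
  have hc₁ : c₁ ∈ D := Finset.singleton_subset_iff.mp hc₁D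
  have hc₂ : c₂ ∈ 𝒞 \ D :=
    Finset.mem_sdiff.mpr ⟨h₂, fun hc₂ => hmeet (hdisj hc₁ hc₂ hne)⟩
  obtain ⟨u, hwu, huv, -⟩ := IsSwapCycle.exists_swapReachable_of_pairwise_disjoint
    (fun c hc => hcov.1 c (hD hc)) hdisj
  have hham : hammingDist u v ≤ ∑ c ∈ 𝒞 \ D, (c.length - 1) := by
    refine hammingDist_le_sum_length_sub_one (fun i hi => ?_) fun c hc => ?_
    · obtain ⟨c, hc, hic⟩ := hcov.2 i
      exact ⟨c, Finset.mem_sdiff.mpr ⟨hc, fun hcD => hi (huv c hcD i hic)⟩, hic⟩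
    · obtain ⟨hc, hcD⟩ := Finset.mem_sdiff.mp hc
      obtain ⟨d, hd, hcd⟩ := hmax c hc hcD
      simp only [List.Disjoint, not_forall] at hcd
      obtain ⟨i, hic, hid, -⟩ := hcd
      exact ⟨i, hic, huv d hd i hid⟩
  have hpos : 0 < ∑ c ∈ 𝒞 \ D, (c.length - 1) :=
    Finset.sum_pos' (fun _ _ => Nat.zero_le _) ⟨c₂, hc₂, Nat.sub_pos_of_lt hlen⟩
  calc swapDist w v
      ≤ ∑ c ∈ D, (c.length - 1) + (hammingDist u v - 1) :=
        (hwu.trans (.of_parikh_eq (hwu.parikh_eq.symm.trans hpar))).swapDist_le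
    _ < ∑ c ∈ D, (c.length - 1) + ∑ c ∈ 𝒞 \ D, (c.length - 1) := by omega
    _ = ∑ c ∈ 𝒞, (c.length - 1) := by rw [add_comm, Finset.sum_sdiff hD]

end IsCycleCover

end Words

theorem stmt14 (n σ : ℕ) (w v : Fin n → Fin σ) (𝒞 : Finset (List (Fin n)))
    (hcov : IsCycleCover w v 𝒞)
    (hmin : ∑ c ∈ 𝒞, (c.length - 1) = swapDist w v) :
    ∀ c₁ ∈ 𝒞, ∀ c₂ ∈ 𝒞, c₁ ≠ c₂ → ∀ i : Fin n, i ∈ c₁ → i ∉ c₂ := by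
  intro c₁ h₁ c₂ h₂ hne i hi₁ hi₂
  wlog hlen : 1 < c₂.length generalizing c₁ c₂
  · have hc₂ : c₂ = [i] := not_imp_comm.mp (one_lt_length_of_mem_of_ne_singleton hi₂) hlen
    exact this c₂ h₂ c₁ h₁ hne.symm hi₂ hi₁
      (one_lt_length_of_mem_of_ne_singleton hi₁ (hc₂ ▸ hne))
  have hpos : 0 < ∑ c ∈ 𝒞, (c.length - 1) :=
    Finset.sum_pos' (fun _ _ => Nat.zero_le _) ⟨c₂, h₂, Nat.sub_pos_of_lt hlen⟩
  have hpar : parikh w = parikh v := parikh_eq_of_swapDist_pos (hmin ▸ hpos)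
  have hmeet : ¬ c₁.Disjoint c₂ := fun hdisj => hdisj hi₁ hi₂
  exact (hcov.swapDist_lt_sum_of_not_disjoint hpar h₁ h₂ hne hmeet hlen).ne' hmin
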